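/- The down-walk transition matrix P^{down} and the harmonic-walk transition matrix P on S_k = X_k^± ∪ {Θ} are row-stochastic: every entry lies in [0,1] and every row sums to 1. -/

import Mathlib

open BigOperators Matrix Kronecker

attribute [local instance] Classical.propDecidable

noncomputable section

namespace QWSC

/-- A finite abstract simplicial complex on the vertex set `Fin n`:
a family of vertex sets closed under taking subsets. -/
def IsComplex (n : ℕ) (X : Finset (Finset (Fin n))) : Prop :=
  ∀ s ∈ X, ∀ t ⊆ s, t ∈ X

/-- The weighted boundary operator `∂_k : C_k → C_{k-1}` written as a matrix in the
orthonormal chain bases (rows are indexed by `(k-1)`-simplices, columns by `k`-simplices;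
a `k`-simplex has `k+1` vertices).  On the orthonormal basis vector of
`σ = {v_0 < … < v_k}` it has entries `(-1)^j w(v_j)` at the face `σ \ {v_j}`. -/
def boundary (n : ℕ) (X : Finset (Finset (Fin n))) (w : Fin n → ℝ) (k : ℕ) :
    Matrix (Finset (Fin n)) (Finset (Fin n)) ℝ :=
  Matrix.of fun τ σ =>
    if σ ∈ X ∧ σ.card = k + 1 ∧ τ ⊆ σ ∧ τ.card = k then
      ∑ v ∈ σ \ τ, (-1 : ℝ) ^ ((σ.filter fun u => u < v).card) * w v
    else 0

/-- The weighted up Laplacian `Δ_k^{up} = ∂_{k+1} ∂_{k+1}^*`. -/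
def upLap (n : ℕ) (X : Finset (Finset (Fin n))) (w : Fin n → ℝ) (k : ℕ) :
    Matrix (Finset (Fin n)) (Finset (Fin n)) ℝ :=
  boundary n X w (k + 1) * (boundary n X w (k + 1))ᵀ

/-- The weighted down Laplacian `Δ_k^{down} = ∂_k^* ∂_k`. -/
def downLap (n : ℕ) (X : Finset (Finset (Fin n))) (w : Fin n → ℝ) (k : ℕ) :
    Matrix (Finset (Fin n)) (Finset (Fin n)) ℝ :=
  (boundary n X w k)ᵀ * boundary n X w k

/-- The weighted combinatorial Laplacian `Δ_k = Δ_k^{up} + Δ_k^{down}`. -/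
def fullLap (n : ℕ) (X : Finset (Finset (Fin n))) (w : Fin n → ℝ) (k : ℕ) :
    Matrix (Finset (Fin n)) (Finset (Fin n)) ℝ :=
  upLap n X w k + downLap n X w k

/-- `true` iff removing the vertex `v` from `σ` reverses the induced orientation,
i.e. the position of `v` in the increasing ordering of `σ` is odd. -/
def faceFlip (n : ℕ) (σ : Finset (Fin n)) (v : Fin n) : Bool :=
  decide ((σ.filter fun u => u < v).card % 2 = 1)

/-- An oriented simplex: a vertex set together with an orientation bit
(`false` = positively oriented, `true` = negatively oriented). -/
abbrev OSimp (n : ℕ) := Finset (Fin n) × Bool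

/-- Up-adjacency `σ ∼↑ σ'` of oriented simplices: the vertex sets are distinct, their
union is a common coface belonging to `X`, and the orientations induced on the common
coface by `σ` and by `σ'` agree. -/
def UpAdj (n : ℕ) (X : Finset (Finset (Fin n))) (σ σ' : OSimp n) : Prop :=
  σ.1 ≠ σ'.1 ∧ σ.1 ∪ σ'.1 ∈ X ∧ (σ.1 ∪ σ'.1).card = σ.1.card + 1 ∧
    σ'.1.card = σ.1.card ∧
    ∀ v ∈ σ'.1 \ σ.1, ∀ v' ∈ σ.1 \ σ'.1,
      xor σ.2 (faceFlip n (σ.1 ∪ σ'.1) v) = xor σ'.2 (faceFlip n (σ.1 ∪ σ'.1) v')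

/-- Down-adjacency `σ ∼↓ σ'` of oriented simplices: the vertex sets are distinct, they
share a common face (their intersection, of cardinality one less), and the orientations
induced on the common face by `σ` and by `σ'` agree. -/
def DownAdj (n : ℕ) (σ σ' : OSimp n) : Prop :=
  σ.1 ≠ σ'.1 ∧ (σ.1 ∩ σ'.1).card + 1 = σ.1.card ∧ σ'.1.card = σ.1.card ∧
    ∀ v ∈ σ.1 \ σ'.1, ∀ v' ∈ σ'.1 \ σ.1,
      xor σ.2 (faceFlip n σ.1 v) = xor σ'.2 (faceFlip n σ'.1 v')

/-- `up(σ)`: the vertices `u ∉ σ` with `σ ∪ {u} ∈ X`. -/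
def upSet (n : ℕ) (X : Finset (Finset (Fin n))) (σ : Finset (Fin n)) : Finset (Fin n) :=
  Finset.univ.filter fun u => u ∉ σ ∧ insert u σ ∈ X

/-- The set of `k`-simplices of `X` (those with `k+1` vertices). -/
def simplices (n : ℕ) (X : Finset (Finset (Fin n))) (k : ℕ) : Finset (Finset (Fin n)) :=
  X.filter fun s => s.card = k + 1

/-- Normalization constant `K^{up} = max_{σ∈X_k} Σ_{u∈V∖σ} Σ_{v∈σ∪{u}} w(u)w(v)`. -/
def Kup (n : ℕ) (X : Finset (Finset (Fin n))) (w : Fin n → ℝ) (k : ℕ) : ℝ :=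
  sSup {x : ℝ | ∃ σ ∈ X, σ.card = k + 1 ∧ x = ∑ u ∈ σᶜ, ∑ v ∈ insert u σ, w u * w v}

/-- Normalization constant `K^{down} = max_{σ∈X_k} Σ_{u∈σ} Σ_{v∈V∖(σ∖{u})} w(u)w(v)`. -/
def Kdown (n : ℕ) (X : Finset (Finset (Fin n))) (w : Fin n → ℝ) (k : ℕ) : ℝ :=
  sSup {x : ℝ | ∃ σ ∈ X, σ.card = k + 1 ∧ x = ∑ u ∈ σ, ∑ v ∈ (σ.erase u)ᶜ, w u * w v}

/-- Normalization constant `K = max_{σ∈X_k} (Σ_{v∈V} w(v)² + Σ_{u∈V∖σ} Σ_{v∈σ} w(u)w(v))`. -/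
def Kfull (n : ℕ) (X : Finset (Finset (Fin n))) (w : Fin n → ℝ) (k : ℕ) : ℝ :=
  sSup {x : ℝ | ∃ σ ∈ X, σ.card = k + 1 ∧
    x = (∑ v : Fin n, w v ^ 2) + ∑ u ∈ σᶜ, ∑ v ∈ σ, w u * w v}

/-- The `k`-th chain space `C_k`: the span of the basis vectors indexed by
`k`-simplices of `X`, inside the coordinate space of the orthonormal chain basis. -/
def chainSpace (n : ℕ) (X : Finset (Finset (Fin n))) (k : ℕ) :
    Submodule ℝ (Finset (Fin n) → ℝ) :=
  Submodule.span ℝ ((fun σ => Pi.single σ (1 : ℝ)) '' {σ | σ ∈ X ∧ σ.card = k + 1})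

/-- The state space `S_k = X_k^± ∪ {Θ}` of the walks; `none` is the absorbing state `Θ`. -/
abbrev SState (n : ℕ) := Option (OSimp n)

/-- A state is a member of `S_k`: either the absorbing state, or an oriented
`k`-simplex of `X`. -/
def valid (n : ℕ) (X : Finset (Finset (Fin n))) (k : ℕ) : SState n → Prop
  | none => True
  | some σ => σ.1 ∈ X ∧ σ.1.card = k + 1

/-- `η^{up}_σ = 1 − (1/K^{up}) Σ_{τ∈X_k^+} |(Δ_k^{up})_{τ,σ_+}|`. -/
def etaUp (n : ℕ) (X : Finset (Finset (Fin n))) (w : Fin n → ℝ) (k : ℕ) (σ : OSimp n) : ℝ :=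
  1 - (∑ τ ∈ simplices n X k, |upLap n X w k τ σ.1|) / Kup n X w k

/-- `η^{down}_σ = 1 − (1/K^{down}) Σ_{τ∈X_k^+} |(Δ_k^{down})_{τ,σ_+}|`. -/
def etaDown (n : ℕ) (X : Finset (Finset (Fin n))) (w : Fin n → ℝ) (k : ℕ) (σ : OSimp n) : ℝ :=
  1 - (∑ τ ∈ simplices n X k, |downLap n X w k τ σ.1|) / Kdown n X w k

/-- `η_σ = 1 − (1/K) Σ_{τ∈X_k^+} |(Δ_k)_{τ,σ_+}|`. -/
def etaFull (n : ℕ) (X : Finset (Finset (Fin n))) (w : Fin n → ℝ) (k : ℕ) (σ : OSimp n) : ℝ :=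
  1 - (∑ τ ∈ simplices n X k, |fullLap n X w k τ σ.1|) / Kfull n X w k

/-- The up-walk transition matrix `P^{up}` on `S_k`. -/
def Pup (n : ℕ) (X : Finset (Finset (Fin n))) (w : Fin n → ℝ) (k : ℕ) :
    SState n → SState n → ℝ
  | some σ, some σ' =>
      if σ.1 ∈ X ∧ σ.1.card = k + 1 ∧ σ'.1 ∈ X ∧ σ'.1.card = k + 1 then
        if σ = σ' then (∑ u ∈ upSet n X σ.1, w u ^ 2) / Kup n X w k
        else if UpAdj n X σ σ' then
          ((∑ v ∈ σ.1 \ σ'.1, w v) * (∑ v ∈ σ'.1 \ σ.1, w v)) / Kup n X w k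
        else 0
      else 0
  | some σ, none => if σ.1 ∈ X ∧ σ.1.card = k + 1 then etaUp n X w k σ else 0
  | none, none => 1
  | none, some _ => 0

/-- The down-walk transition matrix `P^{down}` on `S_k`. -/
def Pdown (n : ℕ) (X : Finset (Finset (Fin n))) (w : Fin n → ℝ) (k : ℕ) :
    SState n → SState n → ℝ
  | some σ, some σ' =>
      if σ.1 ∈ X ∧ σ.1.card = k + 1 ∧ σ'.1 ∈ X ∧ σ'.1.card = k + 1 then
        if σ = σ' then (∑ v ∈ σ.1, w v ^ 2) / Kdown n X w k
        else if DownAdj n σ σ' then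
          ((∑ v ∈ σ.1 \ σ'.1, w v) * (∑ v ∈ σ'.1 \ σ.1, w v)) / Kdown n X w k
        else 0
      else 0
  | some σ, none => if σ.1 ∈ X ∧ σ.1.card = k + 1 then etaDown n X w k σ else 0
  | none, none => 1
  | none, some _ => 0

/-- The harmonic-walk transition matrix `P` on `S_k`. -/
def Pharm (n : ℕ) (X : Finset (Finset (Fin n))) (w : Fin n → ℝ) (k : ℕ) :
    SState n → SState n → ℝ
  | some σ, some σ' =>
      if σ.1 ∈ X ∧ σ.1.card = k + 1 ∧ σ'.1 ∈ X ∧ σ'.1.card = k + 1 then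
        if σ = σ' then
          ((∑ u ∈ upSet n X σ.1, w u ^ 2) + ∑ v ∈ σ.1, w v ^ 2) / Kfull n X w k
        else if DownAdj n σ σ' ∧ ¬ UpAdj n X σ (σ'.1, !σ'.2) then
          ((∑ v ∈ σ.1 \ σ'.1, w v) * (∑ v ∈ σ'.1 \ σ.1, w v)) / Kfull n X w k
        else 0
      else 0
  | some σ, none => if σ.1 ∈ X ∧ σ.1.card = k + 1 then etaFull n X w k σ else 0
  | none, none => 1
  | none, some _ => 0

/-! ### Quantum encodings -/

/-- The computational basis of `(ℂ²)^{⊗(n+2)}`: `n` membership qubits, one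
orientation qubit, and one qubit flagging the absorbing state. -/
abbrev QIdx (n : ℕ) := (Fin n → Bool) × Bool × Bool

/-- The encoding of states of `S_k` as computational basis states:
`|σ⟩ = |x_σ⟩|s(σ)⟩|0⟩` and `|Θ⟩ = |0^n⟩|0⟩|1⟩`. -/
def encode (n : ℕ) : SState n → QIdx n
  | none => (fun _ => false, false, true)
  | some σ => (fun i => decide (i ∈ σ.1), σ.2, false)

/-- The all-zeros basis state `|0^{n+2}⟩`. -/
def zeroQ (n : ℕ) : QIdx n := (fun _ => false, false, false)

/-- The projector `Π_k^±` onto the span of the encoded oriented `k`-simplices of `X`. -/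
def PiPM (n : ℕ) (X : Finset (Finset (Fin n))) (k : ℕ) : Matrix (QIdx n) (QIdx n) ℂ :=
  Matrix.of fun p q =>
    if p = q ∧ ∃ σ : OSimp n, σ.1 ∈ X ∧ σ.1.card = k + 1 ∧ p = encode n (some σ) then 1 else 0

/-- The projector `Π_k` onto the span of the encoded positively oriented
`k`-simplices of `X`. -/
def PiK (n : ℕ) (X : Finset (Finset (Fin n))) (k : ℕ) : Matrix (QIdx n) (QIdx n) ℂ :=
  Matrix.of fun p q =>
    if p = q ∧ ∃ s ∈ X, s.card = k + 1 ∧ p = encode n (some (s, false)) then 1 else 0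

/-- Decode a basis state into the state of `S_k` it represents (if any). -/
def decodeQ (n : ℕ) : QIdx n → Option (SState n) := fun q =>
  if q.2.2 = false then some (some ((Finset.univ.filter fun i => q.1 i = true), q.2.1))
  else if q = encode n none then some none else none

/-- Identify a transition kernel `P` on `S_k` with the operator on `(ℂ²)^{⊗(n+2)}`
having `⟨σ'|P|σ⟩ = P_{σ,σ'}` for `σ, σ' ∈ S_k`, vanishing off the span of `S_k`. -/
def toQMat (n : ℕ) (P : SState n → SState n → ℝ) : Matrix (QIdx n) (QIdx n) ℂ :=
  Matrix.of fun q' q =>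
    match decodeQ n q, decodeQ n q' with
    | some σ, some σ' => (P σ σ' : ℂ)
    | _, _ => 0

/-- Identify a matrix indexed by vertex sets (acting on the chain space in the
orthonormal basis of positively oriented simplices) with an operator on
`(ℂ²)^{⊗(n+2)}` supported on the encoded positively oriented simplices. -/
def lapQ (n : ℕ) (L : Matrix (Finset (Fin n)) (Finset (Fin n)) ℝ) :
    Matrix (QIdx n) (QIdx n) ℂ :=
  Matrix.of fun q' q =>
    if q'.2.1 = false ∧ q'.2.2 = false ∧ q.2.1 = false ∧ q.2.2 = false then
      (L (Finset.univ.filter fun i => q'.1 i = true)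
         (Finset.univ.filter fun i => q.1 i = true) : ℂ)
    else 0

/-- The SWAP unitary exchanging the two `(n+2)`-qubit registers. -/
def swapMat (n : ℕ) : Matrix (QIdx n × QIdx n) (QIdx n × QIdx n) ℂ :=
  Matrix.of fun p q => if p.1 = q.2 ∧ p.2 = q.1 then 1 else 0

/-- The compression `(· ⊗ ⟨0^{n+2}|) W (· ⊗ |0^{n+2}⟩)` of an operator on two
`(n+2)`-qubit registers to the first register. -/
def compress (n : ℕ) (W : Matrix (QIdx n × QIdx n) (QIdx n × QIdx n) ℂ) :
    Matrix (QIdx n) (QIdx n) ℂ :=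
  Matrix.of fun q' q => W (q', zeroQ n) (q, zeroQ n)

/-- The compression `(· ⊗ ⟨0^α|) W (· ⊗ |0^α⟩)` of an operator on the system
register together with an `α`-qubit ancilla register. -/
def compressA (n α : ℕ) (W : Matrix (QIdx n × (Fin α → Bool)) (QIdx n × (Fin α → Bool)) ℂ) :
    Matrix (QIdx n) (QIdx n) ℂ :=
  Matrix.of fun q' q => W (q', fun _ => false) (q, fun _ => false)

/-- The gate `I^{⊗n} ⊗ (HZ) ⊗ I` acting on the orientation qubit, where `H` is the
Hadamard gate and `Z` the Pauli-Z gate. -/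
def hzGate (n : ℕ) : Matrix (QIdx n) (QIdx n) ℂ :=
  Matrix.of fun p q =>
    if p.1 = q.1 ∧ p.2.2 = q.2.2 then
      (if p.2.1 = false ∧ q.2.1 = true then -((Real.sqrt 2 : ℂ))⁻¹ else ((Real.sqrt 2 : ℂ))⁻¹)
    else 0


def sg (n : ℕ) (s : Finset (Fin n)) (v : Fin n) : ℝ := (-1 : ℝ) ^ ((s.filter fun u => u < v).card)

lemma sg_sq (n : ℕ) (s : Finset (Fin n)) (v : Fin n) : sg n s v * sg n s v = 1 := by
  unfold sg
  rw [← pow_add, ← two_mul, pow_mul]; simp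

lemma sg_abs (n : ℕ) (s : Finset (Fin n)) (v : Fin n) : |sg n s v| = 1 := by
  unfold sg
  rw [abs_pow]; simp

lemma bd_insert (n : ℕ) (X : Finset (Finset (Fin n))) (w : Fin n → ℝ) (k : ℕ)
    (ρ : Finset (Fin n)) (a : Fin n) (ha : a ∉ ρ) (hc : ρ.card = k) (hX : insert a ρ ∈ X) :
    boundary n X w k ρ (insert a ρ) = sg n (insert a ρ) a * w a := by
  have h1 : insert a ρ \ ρ = {a} := by
    ext x; simp only [Finset.mem_sdiff, Finset.mem_insert, Finset.mem_singleton]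
    constructor
    · rintro ⟨h | h, h'⟩
      · exact h
      · exact absurd h h'
    · rintro rfl; exact ⟨Or.inl rfl, ha⟩
  unfold boundary
  rw [Matrix.of_apply, if_pos ⟨hX, by rw [Finset.card_insert_of_notMem ha, hc],
    Finset.subset_insert _ _, hc⟩, h1, Finset.sum_singleton]
  rfl

lemma bd_ne (n : ℕ) (X : Finset (Finset (Fin n))) (w : Fin n → ℝ) (k : ℕ)
    (ρ σ : Finset (Fin n)) (h : boundary n X w k ρ σ ≠ 0) :
    ρ.card = k ∧ σ ∈ X ∧ ∃ a, a ∉ ρ ∧ insert a ρ = σ := by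
  unfold boundary at h
  rw [Matrix.of_apply] at h
  split_ifs at h with h1
  · obtain ⟨h1, h2, h3, h4⟩ := h1
    refine ⟨h4, h1, ?_⟩
    have := Finset.covBy_iff_card_sdiff_eq_one.2 ⟨h3, by
      rw [Finset.card_sdiff_of_subset h3]; omega⟩
    obtain ⟨a, ha, he⟩ := Finset.covBy_iff_exists_insert.1 this
    exact ⟨a, ha, he⟩
  · exact absurd rfl h

lemma bd_erase (n : ℕ) (X : Finset (Finset (Fin n))) (w : Fin n → ℝ) (k : ℕ)
    (σ : Finset (Fin n)) (hX : σ ∈ X) (hc : σ.card = k + 1) (a : Fin n) (ha : a ∈ σ) :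
    boundary n X w k (σ.erase a) σ = sg n σ a * w a := by
  have h := bd_insert n X w k (σ.erase a) a (by simp) (by rw [Finset.card_erase_of_mem ha]; omega)
    (by rwa [Finset.insert_erase ha])
  rwa [Finset.insert_erase ha] at h

lemma erase_injOn' (n : ℕ) (σ : Finset (Fin n)) :
    Set.InjOn (fun v => σ.erase v) (σ : Set (Fin n)) := by
  intro x hx y hy h
  by_contra hne
  have : y ∈ σ.erase x := Finset.mem_erase.2 ⟨fun h => hne h.symm, hy⟩
  simp only at h
  rw [h] at this
  simp at this

lemma sum_bd (n : ℕ) (X : Finset (Finset (Fin n))) (w : Fin n → ℝ) (k : ℕ)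
    (σ : Finset (Fin n)) (g : Finset (Fin n) → ℝ)
    (hg : ∀ ρ, boundary n X w k ρ σ = 0 → g ρ = 0) :
    ∑ ρ, g ρ = ∑ v ∈ σ, g (σ.erase v) := by
  symm
  refine Finset.sum_of_injOn (fun v => σ.erase v) (erase_injOn' n σ) (fun _ _ => by simp) ?_
    (fun _ _ => rfl)
  intro ρ _ hρ
  apply hg
  by_contra h
  obtain ⟨_, _, a, ha, rfl⟩ := bd_ne n X w k ρ σ h
  exact hρ ⟨a, by simp, by simp [ha]⟩

lemma down_diag (n : ℕ) (X : Finset (Finset (Fin n))) (w : Fin n → ℝ) (k : ℕ)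
    (σ : Finset (Fin n)) (hX : σ ∈ X) (hc : σ.card = k + 1) :
    downLap n X w k σ σ = ∑ v ∈ σ, w v ^ 2 := by
  unfold downLap
  rw [Matrix.mul_apply]
  simp only [Matrix.transpose_apply]
  rw [sum_bd n X w k σ _ (fun ρ h => by simp [h])]
  refine Finset.sum_congr rfl fun v hv => ?_
  rw [bd_erase n X w k σ hX hc v hv]
  linear_combination (w v)^2 * sg_sq n σ v

lemma up_diag (n : ℕ) (X : Finset (Finset (Fin n))) (w : Fin n → ℝ) (k : ℕ)
    (σ : Finset (Fin n)) (hc : σ.card = k + 1) :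
    upLap n X w k σ σ = ∑ v ∈ upSet n X σ, w v ^ 2 := by
  unfold upLap
  rw [Matrix.mul_apply]
  simp only [Matrix.transpose_apply]
  symm
  refine Finset.sum_of_injOn (fun v => insert v σ) ?_ (fun _ _ => by simp) ?_ ?_
  · intro x hx y hy h
    simp only [upSet, Finset.coe_filter, Set.mem_setOf_eq] at hx hy h
    have : x ∈ insert y σ := by rw [← h]; simp
    rcases Finset.mem_insert.1 this with h | h
    · exact h
    · exact absurd h hx.2.1
  · intro U _ hU
    have : boundary n X w (k+1) σ U = 0 := by
      by_contra h
      obtain ⟨_, hUX, a, ha, rfl⟩ := bd_ne n X w _ _ _ h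
      exact hU ⟨a, by simp [upSet, ha, hUX], rfl⟩
    simp [this]
  · intro v hv
    simp only [upSet, Finset.mem_filter] at hv
    rw [bd_insert n X w (k+1) σ v hv.2.1 hc hv.2.2]
    linear_combination -(w v)^2 * sg_sq n (insert v σ) v

/-- two sets sharing a face -/
def Adj' (n : ℕ) (k : ℕ) (σ τ : Finset (Fin n)) : Prop :=
  ∃ ρ a b, a ∉ ρ ∧ b ∉ ρ ∧ a ≠ b ∧ ρ.card = k ∧ insert a ρ = σ ∧ insert b ρ = τ

lemma down_zero (n : ℕ) (X : Finset (Finset (Fin n))) (w : Fin n → ℝ) (k : ℕ)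
    (σ τ : Finset (Fin n)) (hne : σ ≠ τ) (h : ¬ Adj' n k σ τ) : downLap n X w k τ σ = 0 := by
  unfold downLap
  rw [Matrix.mul_apply]
  simp only [Matrix.transpose_apply]
  refine Finset.sum_eq_zero fun ρ _ => ?_
  by_contra hh
  obtain ⟨h1, h2⟩ := mul_ne_zero_iff.1 hh
  obtain ⟨hc, _, b, hb, hb'⟩ := bd_ne n X w _ _ _ h1
  obtain ⟨_, _, a, ha, ha'⟩ := bd_ne n X w _ _ _ h2
  refine h ⟨ρ, a, b, ha, hb, ?_, hc, ha', hb'⟩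
  rintro rfl
  exact hne (ha'.symm.trans hb')

lemma up_zero (n : ℕ) (X : Finset (Finset (Fin n))) (w : Fin n → ℝ) (k : ℕ)
    (σ τ : Finset (Fin n)) (hne : σ ≠ τ) (h : ¬ Adj' n k σ τ) : upLap n X w k τ σ = 0 := by
  unfold upLap
  rw [Matrix.mul_apply]
  simp only [Matrix.transpose_apply]
  refine Finset.sum_eq_zero fun U _ => ?_
  by_contra hh
  obtain ⟨h1, h2⟩ := mul_ne_zero_iff.1 hh
  obtain ⟨_, _, a, ha, ha'⟩ := bd_ne n X w _ _ _ h1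
  obtain ⟨hc, _, b, hb, hb'⟩ := bd_ne n X w _ _ _ h2
  have hab : a ≠ b := by
    rintro rfl
    apply hne
    rw [← Finset.erase_insert ha, ← Finset.erase_insert hb, ha', hb']
  have haσ : a ∈ σ := by
    have : a ∈ insert b σ := by rw [hb', ← ha']; simp
    exact (Finset.mem_insert.1 this).resolve_left hab
  refine h ⟨σ.erase a, a, b, by simp, by simp [hb], hab, ?_, Finset.insert_erase haσ, ?_⟩
  · rw [Finset.card_erase_of_mem haσ]; omega
  · rw [← Finset.erase_insert ha, ha', ← hb', Finset.erase_insert_of_ne hab.symm]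

lemma down_off (n : ℕ) (X : Finset (Finset (Fin n))) (w : Fin n → ℝ) (k : ℕ)
    (ρ : Finset (Fin n)) (a b : Fin n) (ha : a ∉ ρ) (hb : b ∉ ρ) (hab : a ≠ b)
    (hc : ρ.card = k) (hXa : insert a ρ ∈ X) (hXb : insert b ρ ∈ X) :
    downLap n X w k (insert b ρ) (insert a ρ) =
      sg n (insert a ρ) a * sg n (insert b ρ) b * (w a * w b) := by
  unfold downLap
  rw [Matrix.mul_apply]
  simp only [Matrix.transpose_apply]
  rw [Finset.sum_eq_single ρ, bd_insert n X w k ρ a ha hc hXa, bd_insert n X w k ρ b hb hc hXb]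
  · ring
  · intro ρ' _ hne
    by_contra hh
    obtain ⟨h1, h2⟩ := mul_ne_zero_iff.1 hh
    obtain ⟨hc', _, b', hb', hb''⟩ := bd_ne n X w _ _ _ h1
    obtain ⟨_, _, a', ha', ha''⟩ := bd_ne n X w _ _ _ h2
    apply hne
    apply Finset.eq_of_subset_of_card_le
    · intro x hx
      have h1 : x ∈ insert b ρ := by rw [← hb'']; simp [hx]
      have h2 : x ∈ insert a ρ := by rw [← ha'']; simp [hx]
      rcases Finset.mem_insert.1 h1 with h | h
      · rcases Finset.mem_insert.1 h2 with h' | h'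
        · exact absurd (h'.symm.trans h) hab
        · exact h'
      · exact h
    · omega
  · simp

lemma up_off (n : ℕ) (X : Finset (Finset (Fin n))) (w : Fin n → ℝ) (k : ℕ)
    (ρ : Finset (Fin n)) (a b : Fin n) (ha : a ∉ ρ) (hb : b ∉ ρ) (hab : a ≠ b)
    (hc : ρ.card = k) :
    upLap n X w k (insert b ρ) (insert a ρ) =
      if insert a (insert b ρ) ∈ X then
      sg n (insert a (insert b ρ)) a * sg n (insert a (insert b ρ)) b * (w a * w b) else 0 := by
  have ha' : a ∉ insert b ρ := by simp [ha, hab]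
  have hb' : b ∉ insert a ρ := by simp [hb, hab.symm]
  have hz : ∀ U, U ≠ insert a (insert b ρ) →
      boundary n X w (k+1) (insert b ρ) U * boundary n X w (k+1) (insert a ρ) U = 0 := by
    intro U hne
    by_contra hh
    obtain ⟨h1, h2⟩ := mul_ne_zero_iff.1 hh
    obtain ⟨_, _, c, hc, rfl⟩ := bd_ne n X w _ _ _ h1
    obtain ⟨_, _, d, hd, hd'⟩ := bd_ne n X w _ _ _ h2
    apply hne
    have : a ∈ insert c (insert b ρ) := by rw [← hd']; simp
    rw [(Finset.mem_insert.1 this).resolve_right ha']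
  unfold upLap
  rw [Matrix.mul_apply]
  simp only [Matrix.transpose_apply]
  rw [Finset.sum_eq_single (insert a (insert b ρ)) (fun U _ h => hz U h) (by simp)]
  split_ifs with h
  · rw [bd_insert n X w (k+1) (insert b ρ) a ha' (by simp [hb, hc]) h]
    rw [Finset.insert_comm a b ρ] at h ⊢
    rw [bd_insert n X w (k+1) (insert a ρ) b hb' (by simp [ha, hc]) h]
    ring
  · by_contra hh
    obtain ⟨h1, h2⟩ := mul_ne_zero_iff.1 hh
    exact h (bd_ne n X w _ _ _ h1).2.1

lemma cnt (n : ℕ) (s : Finset (Fin n)) (a v : Fin n) (ha : a ∉ s) :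
    ((insert a s).filter fun u => u < v).card =
      (s.filter fun u => u < v).card + if a < v then 1 else 0 := by
  rw [Finset.filter_insert]
  split_ifs with h
  · rw [Finset.card_insert_of_notMem (by simp [ha])]
  · rfl

/-- the sign count -/
lemma cnt4 (n : ℕ) (ρ : Finset (Fin n)) (a b : Fin n) (ha : a ∉ ρ) (hb : b ∉ ρ) (hab : a ≠ b) :
    ((insert a (insert b ρ)).filter fun u => u < a).card +
    ((insert a (insert b ρ)).filter fun u => u < b).card =
    ((insert a ρ).filter fun u => u < a).card + ((insert b ρ).filter fun u => u < b).card + 1 := by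
  have ha' : a ∉ insert b ρ := by simp [ha, hab]
  rw [cnt n _ a _ ha', cnt n _ a _ ha', cnt n _ b _ hb, cnt n _ b _ hb, cnt n _ a _ ha]
  rcases lt_or_gt_of_ne hab with h | h
  · simp [h, h.not_gt]; ring
  · simp [h, h.not_gt]; ring

lemma full_off (n : ℕ) (X : Finset (Finset (Fin n))) (w : Fin n → ℝ) (k : ℕ)
    (ρ : Finset (Fin n)) (a b : Fin n) (ha : a ∉ ρ) (hb : b ∉ ρ) (hab : a ≠ b)
    (hc : ρ.card = k) (hXa : insert a ρ ∈ X) (hXb : insert b ρ ∈ X) :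
    fullLap n X w k (insert b ρ) (insert a ρ) =
      if insert a (insert b ρ) ∈ X then 0 else
      sg n (insert a ρ) a * sg n (insert b ρ) b * (w a * w b) := by
  unfold fullLap
  rw [Matrix.add_apply, up_off n X w k ρ a b ha hb hab hc,
    down_off n X w k ρ a b ha hb hab hc hXa hXb]
  split_ifs
  · unfold sg
    rw [← pow_add, ← pow_add, cnt4 n ρ a b ha hb hab, pow_succ]; ring
  · ring

lemma down_sum_le (n : ℕ) (X : Finset (Finset (Fin n))) (w : Fin n → ℝ) (hw : ∀ v, 0 < w v) (k : ℕ)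
    (σ : Finset (Fin n)) (hX : σ ∈ X) (hc : σ.card = k + 1) :
    ∑ τ ∈ simplices n X k, |downLap n X w k τ σ| ≤
      ∑ u ∈ σ, ∑ v ∈ (σ.erase u)ᶜ, w u * w v := by
  have key : ∀ ρ τ, |boundary n X w k ρ τ| ≤ ∑ v ∈ ρᶜ, if τ = insert v ρ then w v else 0 := by
    intro ρ τ
    have nn : ∀ v ∈ ρᶜ, 0 ≤ if τ = insert v ρ then w v else 0 := fun v _ => by
      split_ifs
      · exact (hw v).le
      · exact le_rfl
    by_cases h : boundary n X w k ρ τ = 0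
    · rw [h, abs_zero]
      exact Finset.sum_nonneg nn
    · obtain ⟨hc, hX, a, ha, rfl⟩ := bd_ne n X w _ _ _ h
      rw [bd_insert n X w k ρ a ha hc hX, abs_mul, sg_abs, one_mul, abs_of_pos (hw a)]
      refine le_trans ?_ (Finset.single_le_sum nn (a := a) (by simp [ha]))
      simp
  have h1 : ∀ τ, |downLap n X w k τ σ| ≤
      ∑ u ∈ σ, ∑ v ∈ (σ.erase u)ᶜ, if τ = insert v (σ.erase u) then w u * w v else 0 := by
    intro τ
    unfold downLap
    rw [Matrix.mul_apply]
    simp only [Matrix.transpose_apply]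
    rw [sum_bd n X w k σ _ (fun ρ h => by simp [h])]
    refine (Finset.abs_sum_le_sum_abs _ _).trans (Finset.sum_le_sum fun u hu => ?_)
    rw [bd_erase n X w k σ hX hc u hu, abs_mul, abs_mul, sg_abs, one_mul, abs_of_pos (hw u)]
    refine (mul_le_mul_of_nonneg_right (key _ _) (hw u).le).trans (le_of_eq ?_)
    rw [Finset.sum_mul]
    refine Finset.sum_congr rfl fun v _ => ?_
    split_ifs <;> ring
  refine (Finset.sum_le_sum fun τ _ => h1 τ).trans ?_
  rw [Finset.sum_comm]
  refine Finset.sum_le_sum fun u _ => ?_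
  rw [Finset.sum_comm]
  refine Finset.sum_le_sum fun v _ => ?_
  rw [Finset.sum_ite_eq']
  split_ifs
  · exact le_rfl
  · exact (mul_pos (hw u) (hw v)).le

lemma full_diag (n : ℕ) (X : Finset (Finset (Fin n))) (w : Fin n → ℝ) (k : ℕ)
    (σ : Finset (Fin n)) (hX : σ ∈ X) (hc : σ.card = k + 1) :
    fullLap n X w k σ σ = (∑ u ∈ upSet n X σ, w u ^ 2) + ∑ v ∈ σ, w v ^ 2 := by
  unfold fullLap
  rw [Matrix.add_apply, up_diag n X w k σ hc, down_diag n X w k σ hX hc]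

lemma full_le (n : ℕ) (X : Finset (Finset (Fin n))) (w : Fin n → ℝ) (k : ℕ)
    (σ τ : Finset (Fin n)) (hX : σ ∈ X) (hX' : τ ∈ X) (hne : σ ≠ τ) :
    |fullLap n X w k τ σ| ≤ |downLap n X w k τ σ| := by
  by_cases h : Adj' n k σ τ
  · obtain ⟨ρ, a, b, ha, hb, hab, hc, rfl, rfl⟩ := h
    rw [full_off n X w k ρ a b ha hb hab hc hX hX', down_off n X w k ρ a b ha hb hab hc hX hX']
    split_ifs
    · rw [abs_zero]; exact abs_nonneg _
    · exact le_rfl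
  · unfold fullLap
    rw [Matrix.add_apply, up_zero n X w k σ τ hne h, zero_add]

lemma full_sum_le (n : ℕ) (X : Finset (Finset (Fin n))) (w : Fin n → ℝ) (hw : ∀ v, 0 < w v) (k : ℕ)
    (σ : Finset (Fin n)) (hX : σ ∈ X) (hc : σ.card = k + 1) :
    ∑ τ ∈ simplices n X k, |fullLap n X w k τ σ| ≤
      (∑ v : Fin n, w v ^ 2) + ∑ u ∈ σᶜ, ∑ v ∈ σ, w u * w v := by
  have hσ : σ ∈ simplices n X k := by simp [simplices, hX, hc]
  have h1 : ∑ τ ∈ simplices n X k, |fullLap n X w k τ σ| ≤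
      (∑ v ∈ σᶜ, w v ^ 2) + ∑ τ ∈ simplices n X k, |downLap n X w k τ σ| := by
    rw [← Finset.add_sum_erase _ _ hσ, ← Finset.add_sum_erase _ _ hσ]
    rw [full_diag n X w k σ hX hc, down_diag n X w k σ hX hc]
    have hn : ∀ s : Finset (Fin n), 0 ≤ ∑ v ∈ s, w v ^ 2 :=
      fun s => Finset.sum_nonneg fun v _ => sq_nonneg _
    rw [abs_of_nonneg (add_nonneg (hn _) (hn _)), abs_of_nonneg (hn _)]
    have h2 : ∑ v ∈ upSet n X σ, w v ^ 2 ≤ ∑ v ∈ σᶜ, w v ^ 2 := by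
      refine Finset.sum_le_sum_of_subset_of_nonneg ?_ (fun v _ _ => sq_nonneg _)
      intro v hv
      simp only [upSet, Finset.mem_filter] at hv
      simp [hv.2.1]
    have h3 : ∑ τ ∈ (simplices n X k).erase σ, |fullLap n X w k τ σ| ≤
        ∑ τ ∈ (simplices n X k).erase σ, |downLap n X w k τ σ| := by
      refine Finset.sum_le_sum fun τ hτ => ?_
      obtain ⟨h, h'⟩ := Finset.mem_erase.1 hτ
      exact full_le n X w k σ τ hX (Finset.mem_filter.1 h').1 h.symm
    linarith
  refine h1.trans ?_
  refine (add_le_add_right (down_sum_le n X w hw k σ hX hc) _).trans (le_of_eq ?_)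
  have h4 : ∑ u ∈ σ, ∑ v ∈ (σ.erase u)ᶜ, w u * w v =
      ∑ u ∈ σ, (w u ^ 2 + ∑ v ∈ σᶜ, w u * w v) := by
    refine Finset.sum_congr rfl fun u hu => ?_
    rw [Finset.compl_erase, Finset.sum_insert (by simp [hu])]
    ring
  rw [h4, Finset.sum_add_distrib, ← Finset.sum_compl_add_sum σ, Finset.sum_comm (s := σᶜ)]
  rw [add_assoc]
  congr 2
  exact Finset.sum_congr rfl fun u _ => Finset.sum_congr rfl fun v _ => mul_comm _ _

lemma le_sSup_fin (n : ℕ) (X : Finset (Finset (Fin n))) (k : ℕ) (f : Finset (Fin n) → ℝ)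
    (σ : Finset (Fin n)) (hX : σ ∈ X) (hc : σ.card = k + 1) :
    f σ ≤ sSup {x : ℝ | ∃ σ ∈ X, σ.card = k + 1 ∧ x = f σ} := by
  apply le_csSup
  · apply Set.Finite.bddAbove
    apply (Set.finite_range f).subset
    rintro x ⟨s, _, _, rfl⟩
    exact ⟨s, rfl⟩
  · exact ⟨σ, hX, hc, rfl⟩

lemma flip_iff (n : ℕ) (s t : Finset (Fin n)) (a b : Fin n) :
    (faceFlip n s a = faceFlip n t b) ↔
     ((s.filter fun u => u < a).card + (t.filter fun u => u < b).card) % 2 = 0 := by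
  unfold faceFlip
  rw [decide_eq_decide]
  omega

lemma sdiff_ins (n : ℕ) (ρ : Finset (Fin n)) (a b : Fin n) (ha : a ∉ ρ) (hab : a ≠ b) :
    insert a ρ \ insert b ρ = {a} := by
  ext x
  simp only [Finset.mem_sdiff, Finset.mem_insert, Finset.mem_singleton, not_or]
  constructor
  · rintro ⟨h | h, h1, h2⟩
    · exact h
    · exact absurd h h2
  · rintro rfl; exact ⟨Or.inl rfl, hab, ha⟩

lemma ins_ne (n : ℕ) (ρ : Finset (Fin n)) (a b : Fin n) (ha : a ∉ ρ) (hab : a ≠ b) :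
    insert a ρ ≠ insert b ρ := by
  intro h
  have := sdiff_ins n ρ a b ha hab
  rw [h] at this
  simp at this

lemma DownAdj_ins (n : ℕ) (ρ : Finset (Fin n)) (a b : Fin n) (ha : a ∉ ρ) (hb : b ∉ ρ)
    (hab : a ≠ b) (s t : Bool) :
    DownAdj n (insert a ρ, s) (insert b ρ, t) ↔
      xor s (faceFlip n (insert a ρ) a) = xor t (faceFlip n (insert b ρ) b) := by
  have hi : insert a ρ ∩ insert b ρ = ρ := by
    rw [Finset.insert_inter_of_notMem (by simp [hab, ha]), Finset.inter_insert_of_notMem hb,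
      Finset.inter_self]
  unfold DownAdj
  simp only [sdiff_ins n ρ a b ha hab, sdiff_ins n ρ b a hb hab.symm, hi,
    Finset.card_insert_of_notMem ha, Finset.card_insert_of_notMem hb, Finset.mem_singleton,
    forall_eq, ne_eq, true_and]
  exact and_iff_right (ins_ne n ρ a b ha hab)

lemma UpAdj_ins (n : ℕ) (X : Finset (Finset (Fin n))) (ρ : Finset (Fin n)) (a b : Fin n)
    (ha : a ∉ ρ) (hb : b ∉ ρ) (hab : a ≠ b) (s t : Bool) :
    UpAdj n X (insert a ρ, s) (insert b ρ, t) ↔ insert a (insert b ρ) ∈ X ∧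
      xor s (faceFlip n (insert a (insert b ρ)) b) =
        xor t (faceFlip n (insert a (insert b ρ)) a) := by
  have hu : insert a ρ ∪ insert b ρ = insert a (insert b ρ) := by
    ext x; simp only [Finset.mem_union, Finset.mem_insert]; tauto
  unfold UpAdj
  simp only [sdiff_ins n ρ a b ha hab, sdiff_ins n ρ b a hb hab.symm, hu,
    Finset.card_insert_of_notMem ha, Finset.card_insert_of_notMem hb, Finset.mem_singleton,
    forall_eq, ne_eq, Finset.card_insert_of_notMem (show a ∉ insert b ρ by simp [ha, hab]),
    true_and]
  exact and_iff_right (ins_ne n ρ a b ha hab)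

lemma harm_cond (n : ℕ) (X : Finset (Finset (Fin n))) (ρ : Finset (Fin n)) (a b : Fin n)
    (ha : a ∉ ρ) (hb : b ∉ ρ) (hab : a ≠ b) (s t : Bool) :
    (DownAdj n (insert a ρ, s) (insert b ρ, t) ∧ ¬ UpAdj n X (insert a ρ, s) (insert b ρ, !t)) ↔
      insert a (insert b ρ) ∉ X ∧
      xor s (faceFlip n (insert a ρ) a) = xor t (faceFlip n (insert b ρ) b) := by
  rw [DownAdj_ins n ρ a b ha hb hab, UpAdj_ins n X ρ a b ha hb hab]
  have h1 := flip_iff n (insert a ρ) (insert b ρ) a b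
  have h2 := flip_iff n (insert a (insert b ρ)) (insert a (insert b ρ)) a b
  rw [cnt4 n ρ a b ha hb hab] at h2
  have h3 : (faceFlip n (insert a (insert b ρ)) a = faceFlip n (insert a (insert b ρ)) b) ↔
      ¬ (faceFlip n (insert a ρ) a = faceFlip n (insert b ρ) b) := by
    rw [h1, h2]; omega
  revert h3
  generalize faceFlip n (insert a (insert b ρ)) a = x
  generalize faceFlip n (insert a (insert b ρ)) b = y
  generalize faceFlip n (insert a ρ) a = z
  generalize faceFlip n (insert b ρ) b = u
  by_cases hU : insert a (insert b ρ) ∈ X <;> simp only [hU] <;>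
  cases x <;> cases y <;> cases z <;> cases u <;> cases s <;> cases t <;> simp

lemma DownAdj_Adj' (n k : ℕ) (σ τ : OSimp n) (hc : σ.1.card = k + 1) (h : DownAdj n σ τ) :
    Adj' n k σ.1 τ.1 := by
  obtain ⟨h1, h2, h3, _⟩ := h
  have ha := Finset.covBy_iff_exists_insert.1 (Finset.covBy_iff_card_sdiff_eq_one.2
    ⟨Finset.inter_subset_left (s₁ := σ.1) (s₂ := τ.1), by
      rw [Finset.card_sdiff_of_subset Finset.inter_subset_left]; omega⟩)
  have hb := Finset.covBy_iff_exists_insert.1 (Finset.covBy_iff_card_sdiff_eq_one.2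
    ⟨Finset.inter_subset_right (s₁ := σ.1) (s₂ := τ.1), by
      rw [Finset.card_sdiff_of_subset Finset.inter_subset_right]; omega⟩)
  obtain ⟨a, ha, ha'⟩ := ha
  obtain ⟨b, hb, hb'⟩ := hb
  refine ⟨_, a, b, ha, hb, ?_, by omega, ha', hb'⟩
  rintro rfl
  exact h1 (ha'.symm.trans hb')

lemma two_sum (s z u : Bool) (c : ℝ) :
    (if xor s z = xor false u then c else 0) + (if xor s z = xor true u then c else 0) = c := by
  cases s <;> cases z <;> cases u <;> simp

lemma down_pair (n : ℕ) (X : Finset (Finset (Fin n))) (w : Fin n → ℝ) (hw : ∀ v, 0 < w v) (k : ℕ)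
    (σ : OSimp n) (hX : σ.1 ∈ X) (hc : σ.1.card = k + 1) (τ : Finset (Fin n)) :
    Pdown n X w k (some σ) (some (τ, false)) + Pdown n X w k (some σ) (some (τ, true)) =
      if τ ∈ simplices n X k then |downLap n X w k τ σ.1| / Kdown n X w k else 0 := by
  obtain ⟨σ, s⟩ := σ
  simp only at hX hc
  by_cases hτ : τ ∈ simplices n X k
  · rw [if_pos hτ]
    obtain ⟨hτX, hτc⟩ := Finset.mem_filter.1 hτ
    simp only [Pdown, hX, hc, hτX, hτc, and_self, if_true, Prod.mk.injEq]
    by_cases he : σ = τ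
    · subst he
      have hd : ∀ t, ¬ DownAdj n (σ, s) (σ, t) := fun t h => h.1 rfl
      rw [down_diag n X w k σ hX hc, abs_of_nonneg (Finset.sum_nonneg fun v _ => sq_nonneg _)]
      cases s <;> simp [hd]
    · simp only [he, false_and, if_false]
      by_cases h : Adj' n k σ τ
      · obtain ⟨ρ, a, b, ha, hb, hab, hcρ, rfl, rfl⟩ := h
        simp only [DownAdj_ins n ρ a b ha hb hab]
        rw [two_sum, down_off n X w k ρ a b ha hb hab hcρ hX hτX, sdiff_ins n ρ a b ha hab,
          sdiff_ins n ρ b a hb hab.symm, abs_mul, abs_mul, sg_abs, sg_abs,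
          abs_of_pos (mul_pos (hw a) (hw b))]
        simp
      · have hd : ∀ t, ¬ DownAdj n (σ, s) (τ, t) := fun t h' => h (DownAdj_Adj' n k _ _ hc h')
        simp [hd, down_zero n X w k σ τ he h]
  · have : ¬ (τ ∈ X ∧ τ.card = k + 1) := fun h => hτ (Finset.mem_filter.2 h)
    simp [Pdown, hτ, hX, hc, this]

lemma full_pair (n : ℕ) (X : Finset (Finset (Fin n))) (w : Fin n → ℝ) (hw : ∀ v, 0 < w v) (k : ℕ)
    (σ : OSimp n) (hX : σ.1 ∈ X) (hc : σ.1.card = k + 1) (τ : Finset (Fin n)) :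
    Pharm n X w k (some σ) (some (τ, false)) + Pharm n X w k (some σ) (some (τ, true)) =
      if τ ∈ simplices n X k then |fullLap n X w k τ σ.1| / Kfull n X w k else 0 := by
  obtain ⟨σ, s⟩ := σ
  simp only at hX hc
  by_cases hτ : τ ∈ simplices n X k
  · rw [if_pos hτ]
    obtain ⟨hτX, hτc⟩ := Finset.mem_filter.1 hτ
    simp only [Pharm, hX, hc, hτX, hτc, and_self, if_true, Prod.mk.injEq]
    by_cases he : σ = τ
    · subst he
      have hd : ∀ t, ¬ DownAdj n (σ, s) (σ, t) := fun t h => h.1 rfl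
      rw [full_diag n X w k σ hX hc, abs_of_nonneg (add_nonneg
        (Finset.sum_nonneg fun v _ => sq_nonneg _) (Finset.sum_nonneg fun v _ => sq_nonneg _))]
      cases s <;> simp [hd]
    · simp only [he, false_and, if_false]
      by_cases h : Adj' n k σ τ
      · obtain ⟨ρ, a, b, ha, hb, hab, hcρ, rfl, rfl⟩ := h
        simp only [harm_cond n X ρ a b ha hb hab]
        rw [full_off n X w k ρ a b ha hb hab hcρ hX hτX]
        by_cases hU : insert a (insert b ρ) ∈ X
        · simp [hU]
        · simp only [hU, not_false_eq_true, true_and, if_false]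
          rw [two_sum, sdiff_ins n ρ a b ha hab,
            sdiff_ins n ρ b a hb hab.symm, abs_mul, abs_mul, sg_abs, sg_abs,
            abs_of_pos (mul_pos (hw a) (hw b))]
          simp
      · have hd : ∀ t, ¬ DownAdj n (σ, s) (τ, t) := fun t h' => h (DownAdj_Adj' n k _ _ hc h')
        simp [hd, fullLap, down_zero n X w k σ τ he h, up_zero n X w k σ τ he h]
  · have : ¬ (τ ∈ X ∧ τ.card = k + 1) := fun h => hτ (Finset.mem_filter.2 h)
    simp [Pharm, hτ, hX, hc, this]

lemma row_sum (n : ℕ) (S : Finset (Finset (Fin n))) (f : SState n → ℝ) (g : Finset (Fin n) → ℝ)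
    (K : ℝ) (h0 : f none = 1 - (∑ τ ∈ S, g τ) / K)
    (h : ∀ τ, f (some (τ, false)) + f (some (τ, true)) = if τ ∈ S then g τ / K else 0) :
    ∑ x, f x = 1 := by
  rw [Fintype.sum_option, Fintype.sum_prod_type, h0]
  have : ∀ τ : Finset (Fin n), ∑ y, f (some (τ, y)) = if τ ∈ S then g τ / K else 0 := by
    intro τ
    rw [← h τ, Fintype.sum_bool, add_comm]
  rw [Finset.sum_congr rfl fun τ _ => this τ, Finset.sum_ite_mem, Finset.univ_inter,
    Finset.sum_div]
  ring

lemma finish {ι : Type*} [Fintype ι] (f : ι → ℝ) (h : ∀ x, 0 ≤ f x) (hs : ∑ x, f x = 1) :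
    (∀ x, 0 ≤ f x ∧ f x ≤ 1) ∧ ∑ x, f x = 1 :=
  ⟨fun x => ⟨h x, hs ▸ Finset.single_le_sum (fun y _ => h y) (Finset.mem_univ x)⟩, hs⟩

/-- The down-walk transition matrix `P^{down}` and the harmonic-walk
transition matrix `P` on `S_k = X_k^± ∪ {Θ}` are row-stochastic: every entry lies in
`[0,1]` and every row sums to `1`. -/
theorem Pdown_Pharm_row_stochastic (n k : ℕ) (X : Finset (Finset (Fin n)))
    (hX : IsComplex n X) (w : Fin n → ℝ) (hw : ∀ v, 0 < w v)
    (hne : (simplices n X k).Nonempty) :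
    ∀ σ : SState n, valid n X k σ →
      ((∀ σ' : SState n, 0 ≤ Pdown n X w k σ σ' ∧ Pdown n X w k σ σ' ≤ 1) ∧
        ∑ σ' : SState n, Pdown n X w k σ σ' = 1) ∧
      ((∀ σ' : SState n, 0 ≤ Pharm n X w k σ σ' ∧ Pharm n X w k σ σ' ≤ 1) ∧
        ∑ σ' : SState n, Pharm n X w k σ σ' = 1) := by
  intro σ hσ
  have hsn : ∀ s : Finset (Fin n), 0 ≤ ∑ v ∈ s, w v :=
    fun s => Finset.sum_nonneg fun v _ => (hw v).le
  have hqn : ∀ s : Finset (Fin n), 0 ≤ ∑ v ∈ s, w v ^ 2 :=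
    fun s => Finset.sum_nonneg fun v _ => sq_nonneg _
  rcases σ with _ | σ
  · constructor
    · refine finish _ ?_ ?_
      · rintro (_ | x) <;> simp [Pdown]
      · simp [Fintype.sum_option, Pdown]
    · refine finish _ ?_ ?_
      · rintro (_ | x) <;> simp [Pharm]
      · simp [Fintype.sum_option, Pharm]
  · obtain ⟨h1, h2⟩ : σ.1 ∈ X ∧ σ.1.card = k + 1 := hσ
    have hKd : ∑ τ ∈ simplices n X k, |downLap n X w k τ σ.1| ≤ Kdown n X w k :=
      (down_sum_le n X w hw k σ.1 h1 h2).trans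
        (le_sSup_fin n X k (fun σ => ∑ u ∈ σ, ∑ v ∈ (σ.erase u)ᶜ, w u * w v) σ.1 h1 h2)
    have hKf : ∑ τ ∈ simplices n X k, |fullLap n X w k τ σ.1| ≤ Kfull n X w k :=
      (full_sum_le n X w hw k σ.1 h1 h2).trans
        (le_sSup_fin n X k (fun σ => (∑ v : Fin n, w v ^ 2) + ∑ u ∈ σᶜ, ∑ v ∈ σ, w u * w v)
          σ.1 h1 h2)
    have hKd0 : 0 ≤ Kdown n X w k := (Finset.sum_nonneg fun _ _ => abs_nonneg _).trans hKd
    have hKf0 : 0 ≤ Kfull n X w k := (Finset.sum_nonneg fun _ _ => abs_nonneg _).trans hKf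
    constructor
    · refine finish _ ?_ (row_sum n (simplices n X k) _ (fun τ => |downLap n X w k τ σ.1|)
        (Kdown n X w k) ?_ (down_pair n X w hw k σ h1 h2))
      · rintro (_ | x)
        · simp only [Pdown, h1, h2, and_self, if_true, etaDown]
          exact sub_nonneg.2 (div_le_one_of_le₀ hKd hKd0)
        · simp only [Pdown]
          split_ifs
          · exact div_nonneg (hqn _) hKd0
          · exact div_nonneg (mul_nonneg (hsn _) (hsn _)) hKd0
          · exact le_rfl
          · exact le_rfl
      · simp only [Pdown, h1, h2, and_self, if_true, etaDown]
    · refine finish _ ?_ (row_sum n (simplices n X k) _ (fun τ => |fullLap n X w k τ σ.1|)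
        (Kfull n X w k) ?_ (full_pair n X w hw k σ h1 h2))
      · rintro (_ | x)
        · simp only [Pharm, h1, h2, and_self, if_true, etaFull]
          exact sub_nonneg.2 (div_le_one_of_le₀ hKf hKf0)
        · simp only [Pharm]
          split_ifs
          · exact div_nonneg (add_nonneg (hqn _) (hqn _)) hKf0
          · exact div_nonneg (mul_nonneg (hsn _) (hsn _)) hKf0
          · exact le_rfl
          · exact le_rfl
      · simp only [Pharm, h1, h2, and_self, if_true, etaFull]
end QWSC
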